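/- Carathéodory-type bound on the number of terms: let f = f* ∈ M_d(ℂ⟨x⟩) and let L be a monic hermitian linear matrix pencil of size e such that f(X) ⪰ 0 for all X ∈ D_L. Then f admits a representation f = Σ_{i=1}^M sᵢ*sᵢ + Σ_{j=1}^N vⱼ*Lvⱼ with sᵢ ∈ M_d(ℂ⟨x⟩) and vⱼ ∈ ℂ⟨x⟩^{e×d}, all of degree at most ⌊(deg f)/2⌋, in which the total number of terms satisfies M + N ≤ 1 + d² · Σ_{j=0}^{deg f + 1} nʲ. -/

import Mathlib

open scoped Kronecker Matrix ComplexOrder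

/-- Noncommutative polynomials: the free `ℂ`-algebra `ℂ⟨x₁,…,xₙ⟩` on `n` generators. -/
abbrev FreeAlg (n : ℕ) := FreeAlgebra ℂ (Fin n)

/-- Evaluation of a matrix of noncommutative polynomials at an `n`-tuple of `k × k` complex
matrices, i.e. the image under `id ⊗ ev_X`. -/
noncomputable def evalM {n k : ℕ} {I J : Type*} (f : Matrix I J (FreeAlg n))
    (X : Fin n → Matrix (Fin k) (Fin k) ℂ) : Matrix (I × Fin k) (J × Fin k) ℂ :=
  fun p q => FreeAlgebra.lift ℂ X (f p.1 q.1) p.2 q.2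

/-- The conjugate-linear involutive anti-automorphism on `ℂ⟨x⟩` fixing the generators:
reverse each word and conjugate each coefficient. -/
noncomputable def nstar {n : ℕ} (a : FreeAlg n) : FreeAlg n :=
  (FreeAlgebra.equivMonoidAlgebraFreeMonoid).symm
    (.ofCoeff <| Finsupp.mapDomain FreeMonoid.reverse
      (Finsupp.mapRange (starRingEnd ℂ) (map_zero _)
        ((FreeAlgebra.equivMonoidAlgebraFreeMonoid) a).coeff))

/-- Conjugate-transpose of a matrix over `ℂ⟨x⟩`. -/
noncomputable def adjM {n : ℕ} {I J : Type*} (f : Matrix I J (FreeAlg n)) :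
    Matrix J I (FreeAlg n) :=
  fun i j => nstar (f j i)

/-- A matrix `f` over `ℂ⟨x⟩` is hermitian if `f = f*`. -/
def IsHermPoly {n : ℕ} {I : Type*} (f : Matrix I I (FreeAlg n)) : Prop :=
  ∀ i j, f i j = nstar (f j i)

/-- Evaluation `L(X) = A₀ ⊗ I + ∑ⱼ Aⱼ ⊗ Xⱼ` of a linear matrix pencil at a matrix tuple. -/
noncomputable def pencilK {n d k : ℕ} (A0 : Matrix (Fin d) (Fin d) ℂ)
    (A : Fin n → Matrix (Fin d) (Fin d) ℂ) (X : Fin n → Matrix (Fin k) (Fin k) ℂ) :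
    Matrix (Fin d × Fin k) (Fin d × Fin k) ℂ :=
  A0 ⊗ₖ (1 : Matrix (Fin k) (Fin k) ℂ) + ∑ j, A j ⊗ₖ X j

/-- Evaluation `L(X) = I ⊗ I + ∑ⱼ Aⱼ ⊗ Xⱼ` of a monic linear matrix pencil. -/
noncomputable def monicK {n d k : ℕ} (A : Fin n → Matrix (Fin d) (Fin d) ℂ)
    (X : Fin n → Matrix (Fin k) (Fin k) ℂ) : Matrix (Fin d × Fin k) (Fin d × Fin k) ℂ :=
  1 + ∑ j, A j ⊗ₖ X j

/-- The monic pencil `I + ∑ⱼ Aⱼ xⱼ` as a matrix of noncommutative polynomials. -/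
noncomputable def monicPoly {n e : ℕ} (A : Fin n → Matrix (Fin e) (Fin e) ℂ) :
    Matrix (Fin e) (Fin e) (FreeAlg n) :=
  1 + ∑ j, (A j).map (fun c => c • FreeAlgebra.ι ℂ j)

/-- The subspace of noncommutative polynomials of degree at most `δ`:
the `ℂ`-linear span of products of at most `δ` generators. -/
noncomputable def degLE (n δ : ℕ) : Submodule ℂ (FreeAlg n) :=
  Submodule.span ℂ
    {a | ∃ w : List (Fin n), w.length ≤ δ ∧ a = (w.map (FreeAlgebra.ι ℂ)).prod}

/-- A matrix over `ℂ⟨x⟩` has degree at most `δ` if each entry does. -/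
def matDegLE {n : ℕ} {I J : Type*} (f : Matrix I J (FreeAlg n)) (δ : ℕ) : Prop :=
  ∀ i j, f i j ∈ degLE n δ

/-- The degree of a matrix of noncommutative polynomials: the least `δ` such that every entry
lies in the span of words of length at most `δ`. -/
noncomputable def matDeg {n : ℕ} {I J : Type*} (f : Matrix I J (FreeAlg n)) : ℕ :=
  sInf {δ | matDegLE f δ}

/-- Evaluation of `f` at the zero scalar tuple, `f(0) ∈ M_d(ℂ)`. -/
noncomputable def evalZero {n : ℕ} {I J : Type*} (f : Matrix I J (FreeAlg n)) :
    Matrix I J ℂ :=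
  f.map (⇑(FreeAlgebra.lift ℂ (fun _ : Fin n => (0 : ℂ))))

namespace CB

open FreeAlgebra

/-- The monomial attached to a word. -/
noncomputable def word {n : ℕ} (w : List (Fin n)) : FreeAlg n := (w.map (FreeAlgebra.ι ℂ)).prod

lemma word_append {n : ℕ} (u v : List (Fin n)) : word (u ++ v) = word u * word v := by
  simp [word]

lemma word_cons {n : ℕ} (k : Fin n) (v : List (Fin n)) : word (k :: v) = ι ℂ k * word v := by
  simp [word]

lemma lift_word {n : ℕ} {R : Type*} [Ring R] [Algebra ℂ R] (X : Fin n → R) (w : List (Fin n)) :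
    FreeAlgebra.lift ℂ X (word w) = (w.map X).prod := by
  rw [word, map_list_prod, List.map_map]
  congr 1
  apply List.map_congr_left
  intro a _
  simp

/-- Coefficient of a noncommutative polynomial at a word. -/
noncomputable def coef {n : ℕ} (w : List (Fin n)) : FreeAlg n →ₗ[ℂ] ℂ where
  toFun p := ((FreeAlgebra.equivMonoidAlgebraFreeMonoid) p).coeff (FreeMonoid.ofList w)
  map_add' := by intros; simp
  map_smul' := by intros; simp

lemma equiv_word {n : ℕ} (w : List (Fin n)) :
    (FreeAlgebra.equivMonoidAlgebraFreeMonoid) (word w)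
      = MonoidAlgebra.single (FreeMonoid.ofList w) (1 : ℂ) := by
  induction w with
  | nil => simp [word, MonoidAlgebra.one_def]
  | cons a w ih =>
    rw [word_cons, map_mul, ih]
    have : (FreeAlgebra.equivMonoidAlgebraFreeMonoid) (ι ℂ a)
      = MonoidAlgebra.single (FreeMonoid.of a) (1 : ℂ) := by
      simp [FreeAlgebra.equivMonoidAlgebraFreeMonoid]
    rw [this, MonoidAlgebra.single_mul_single]
    simp

lemma coef_word {n : ℕ} (w w' : List (Fin n)) :
    coef w (word w') = if w' = w then 1 else 0 := by
  classical
  simp only [coef, LinearMap.coe_mk, AddHom.coe_mk, equiv_word]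
  by_cases h : w' = w
  · simp [h]
  · rw [if_neg h, MonoidAlgebra.coeff_single, Finsupp.single_apply, if_neg]
    exact fun h' => h (FreeMonoid.ofList.injective h')

lemma coef_ext {n : ℕ} {p q : FreeAlg n} (h : ∀ w, coef w p = coef w q) : p = q := by
  apply FreeAlgebra.equivMonoidAlgebraFreeMonoid.injective
  ext w
  exact h w.toList

lemma coef_nstar {n : ℕ} (p : FreeAlg n) (w : List (Fin n)) :
    coef w (nstar p) = (starRingEnd ℂ) (coef w.reverse p) := by
  simp only [coef, nstar, LinearMap.coe_mk, AddHom.coe_mk, AlgEquiv.apply_symm_apply]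
  have : FreeMonoid.ofList w = FreeMonoid.reverse (FreeMonoid.ofList w.reverse) := by
    apply FreeMonoid.toList.injective
    exact (List.reverse_reverse w).symm
  rw [this, Finsupp.mapDomain_apply]
  · simp [Finsupp.mapRange_apply]
  · intro a b hab
    have := congrArg FreeMonoid.reverse hab
    simpa using this

lemma nstar_add {n : ℕ} (p q : FreeAlg n) : nstar (p + q) = nstar p + nstar q := by
  apply coef_ext; intro w; simp [coef_nstar]

lemma nstar_smul {n : ℕ} (c : ℂ) (p : FreeAlg n) :
    nstar (c • p) = (starRingEnd ℂ c) • nstar p := by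
  apply coef_ext; intro w; simp [coef_nstar]

lemma nstar_zero {n : ℕ} : nstar (0 : FreeAlg n) = 0 := by
  apply coef_ext; intro w; simp [coef_nstar]

lemma nstar_sum {n : ℕ} {ι : Type*} (s : Finset ι) (p : ι → FreeAlg n) :
    nstar (∑ i ∈ s, p i) = ∑ i ∈ s, nstar (p i) := by
  apply coef_ext; intro w; simp [coef_nstar]

lemma nstar_word {n : ℕ} (w : List (Fin n)) : nstar (word w) = word w.reverse := by
  apply coef_ext; intro v; rw [coef_nstar, coef_word, coef_word]
  by_cases h : w = v.reverse
  · simp [h]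
  · have : ¬ w.reverse = v := by
      rintro rfl; simp at h
    simp [h, this]

/-- Words of length at most `m`. -/
abbrev Wd (n m : ℕ) := {w : List (Fin n) // w.length ≤ m}

noncomputable instance {n m : ℕ} : Fintype (Wd n m) :=
  @Fintype.ofFinite _ (List.finite_length_le (Fin n) m).to_subtype

lemma card_Wd (n m : ℕ) : Fintype.card (Wd n m) ≤ ∑ j ∈ Finset.range (m + 1), n ^ j := by
  let g : Wd n m → Σ k : Fin (m + 1), List.Vector (Fin n) k :=
    fun w => ⟨⟨w.1.length, Nat.lt_succ_of_le w.2⟩, ⟨w.1, rfl⟩⟩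
  have hg : Function.Injective g := by
    have key : ∀ w, (g w).2.1 = w.1 := fun w => rfl
    intro a b hab
    apply Subtype.ext
    rw [← key a, ← key b, hab]
  refine (Fintype.card_le_of_injective g hg).trans ?_
  simp [Fintype.card_sigma, card_vector, Finset.sum_range]

lemma coef_finite {n : ℕ} (p : FreeAlg n) : ∃ δ, ∀ w, δ < w.length → coef w p = 0 := by
  let s := ((FreeAlgebra.equivMonoidAlgebraFreeMonoid) p).coeff.support
  refine ⟨s.sup (fun w => w.toList.length), fun w hw => ?_⟩
  by_contra h
  have : FreeMonoid.ofList w ∈ s := by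
    simpa [s, coef] using h
  have := Finset.le_sup (f := fun w : FreeMonoid (Fin n) => w.toList.length) this
  simp at this
  omega

lemma eq_sum_of_coef {n δ : ℕ} {p : FreeAlg n} (h : ∀ w, δ < w.length → coef w p = 0) :
    p = ∑ w : Wd n δ, coef w.1 p • word w.1 := by
  classical
  apply coef_ext; intro v
  simp only [map_sum, map_smul, coef_word, smul_eq_mul, mul_ite, mul_one, mul_zero]
  by_cases hv : v.length ≤ δ
  · rw [Finset.sum_eq_single (⟨v, hv⟩ : Wd n δ)]
    · simp
    · intro b _ hb
      rw [if_neg]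
      rintro rfl; exact hb rfl
    · simp
  · rw [h v (by omega), Finset.sum_eq_zero]
    intro w _
    rw [if_neg]
    rintro rfl; exact hv w.2

lemma word_mem {n δ : ℕ} (w : List (Fin n)) (h : w.length ≤ δ) : word w ∈ degLE n δ :=
  Submodule.subset_span ⟨w, h, rfl⟩

lemma mem_degLE_iff {n δ : ℕ} {p : FreeAlg n} :
    p ∈ degLE n δ ↔ ∀ w, δ < w.length → coef w p = 0 := by
  constructor
  · intro h w hw
    have : degLE n δ ≤ LinearMap.ker (coef w) := by
      apply Submodule.span_le.2
      rintro _ ⟨v, hv, rfl⟩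
      change coef w (word v) = 0
      rw [coef_word, if_neg]
      rintro rfl; omega
    exact this h
  · intro h
    rw [eq_sum_of_coef h]
    exact Submodule.sum_mem _ fun w _ => Submodule.smul_mem _ _ (word_mem _ w.2)

lemma eq_sum {n δ : ℕ} {p : FreeAlg n} (h : p ∈ degLE n δ) :
    p = ∑ w : Wd n δ, coef w.1 p • word w.1 := eq_sum_of_coef (mem_degLE_iff.1 h)

lemma degLE_mono {n a b : ℕ} (h : a ≤ b) {p : FreeAlg n} (hp : p ∈ degLE n a) : p ∈ degLE n b :=
  mem_degLE_iff.2 fun w hw => mem_degLE_iff.1 hp w (by omega)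

lemma matDeg_spec {n d : ℕ} (f : Matrix (Fin d) (Fin d) (FreeAlg n)) : matDegLE f (matDeg f) := by
  have : ({δ | matDegLE f δ} : Set ℕ).Nonempty := by
    choose D hD using fun (a : Fin d × Fin d) => coef_finite (f a.1 a.2)
    refine ⟨Finset.univ.sup D, fun i j => mem_degLE_iff.2 fun w hw => hD (i, j) w ?_⟩
    exact lt_of_le_of_lt (Finset.le_sup (f := D) (Finset.mem_univ (i, j))) hw
  exact Nat.sInf_mem this

/-- Linear functional with prescribed values on words. -/
noncomputable def Lam {n : ℕ} (l : List (Fin n) → ℂ) : FreeAlg n →ₗ[ℂ] ℂ :=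
  (Finsupp.linearCombination ℂ (fun w : FreeMonoid (Fin n) => l w.toList)) ∘ₗ
    (MonoidAlgebra.coeffLinearEquiv ℂ).toLinearMap ∘ₗ
      (FreeAlgebra.equivMonoidAlgebraFreeMonoid).toLinearMap

lemma Lam_word {n : ℕ} (l : List (Fin n) → ℂ) (w : List (Fin n)) : Lam l (word w) = l w := by
  simp [Lam, equiv_word]

/-- Total functional on square matrices of polynomials. -/
noncomputable def LamM {n d : ℕ} (l : Fin d → Fin d → List (Fin n) → ℂ) :
    Matrix (Fin d) (Fin d) (FreeAlg n) →ₗ[ℂ] ℂ :=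
  ∑ i, ∑ j, (Lam (l i j)) ∘ₗ (Matrix.entryLinearMap ℂ (FreeAlg n) i j)

lemma LamM_apply {n d : ℕ} (l : Fin d → Fin d → List (Fin n) → ℂ)
    (F : Matrix (Fin d) (Fin d) (FreeAlg n)) : LamM l F = ∑ i, ∑ j, Lam (l i j) (F i j) := by
  simp [LamM]

/-- Polynomial matrix with given coefficient vector. -/
noncomputable def rowm {n m d e : ℕ} (y : Fin e × Fin d × Wd n m → ℂ) :
    Matrix (Fin e) (Fin d) (FreeAlg n) :=
  fun a i => ∑ u : Wd n m, y (a, i, u) • word u.1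

lemma rowm_deg {n m d e : ℕ} (y : Fin e × Fin d × Wd n m → ℂ) : matDegLE (rowm y) m :=
  fun _ _ => Submodule.sum_mem _ fun u _ => Submodule.smul_mem _ _ (word_mem _ u.2)

/-- `v* L v` -/
noncomputable def pen {n m d e : ℕ} (A : Fin n → Matrix (Fin e) (Fin e) ℂ)
    (y : Fin e × Fin d × Wd n m → ℂ) : Matrix (Fin d) (Fin d) (FreeAlg n) :=
  adjM (rowm y) * monicPoly A * rowm y

/-- `u* L_{ab} v` -/
noncomputable def pw {n e : ℕ} (A : Fin n → Matrix (Fin e) (Fin e) ℂ) (a b : Fin e)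
    (u v : List (Fin n)) : FreeAlg n :=
  (if a = b then (1 : ℂ) else 0) • word (u.reverse ++ v)
    + ∑ k, A k a b • word (u.reverse ++ k :: v)

lemma pw_eq {n e : ℕ} (A : Fin n → Matrix (Fin e) (Fin e) ℂ) (a b : Fin e)
    (u v : List (Fin n)) : pw A a b u v = word u.reverse * monicPoly A a b * word v := by
  have : monicPoly A a b = (if a = b then (1 : ℂ) else 0) • (1 : FreeAlg n)
      + ∑ k, A k a b • ι ℂ k := by
    simp [monicPoly, Matrix.sum_apply, Matrix.one_apply]
  rw [this, pw]
  simp only [word_append, word_cons, mul_add, add_mul, Finset.mul_sum, Finset.sum_mul,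
    mul_smul_comm, smul_mul_assoc, mul_one, mul_assoc]

lemma pen_apply {n m d e : ℕ} (A : Fin n → Matrix (Fin e) (Fin e) ℂ)
    (y : Fin e × Fin d × Wd n m → ℂ) (i j : Fin d) :
    pen A y i j = ∑ a, ∑ u : Wd n m, ∑ b, ∑ v : Wd n m,
      (starRingEnd ℂ (y (a, i, u)) * y (b, j, v)) • pw A a b u.1 v.1 := by
  have h1 : pen A y i j = ∑ b, ∑ a, nstar (rowm y a i) * monicPoly A a b * rowm y b j := by
    simp [pen, Matrix.mul_apply, adjM, Finset.sum_mul]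
  rw [h1, Finset.sum_comm]
  refine Finset.sum_congr rfl fun a _ => ?_
  rw [Finset.sum_comm]
  refine Finset.sum_congr rfl fun b _ => ?_
  simp only [rowm, nstar_sum, nstar_smul, nstar_word, Finset.sum_mul, Finset.mul_sum]
  rw [Finset.sum_comm]
  refine Finset.sum_congr rfl fun u _ => Finset.sum_congr rfl fun v _ => ?_
  simp only [pw_eq, smul_mul_assoc, mul_smul_comm, smul_smul, mul_comm]

lemma pw_star {n e : ℕ} (A : Fin n → Matrix (Fin e) (Fin e) ℂ) (hA : ∀ j, (A j).IsHermitian)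
    (a b : Fin e) (u v : List (Fin n)) : nstar (pw A a b u v) = pw A b a v u := by
  simp only [pw, nstar_add, nstar_sum, nstar_smul, nstar_word]
  congr 1
  · by_cases h : a = b
    · simp [h]
    · simp [h, Ne.symm h]
  · refine Finset.sum_congr rfl fun k _ => ?_
    rw [show (starRingEnd ℂ) (A k a b) = A k b a from (hA k).apply b a]
    simp

lemma pen_herm {n m d e : ℕ} (A : Fin n → Matrix (Fin e) (Fin e) ℂ)
    (hA : ∀ j, (A j).IsHermitian)
    (y : Fin e × Fin d × Wd n m → ℂ) : IsHermPoly (pen A y) := by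
  intro i j
  rw [pen_apply, pen_apply]
  simp only [nstar_sum, nstar_smul, pw_star A hA]
  simp only [← Fintype.sum_prod_type' (f := fun (a : Fin e) (u : Wd n m) => _)]
  rw [Finset.sum_comm]
  refine Finset.sum_congr rfl fun p _ => Finset.sum_congr rfl fun q _ => ?_
  simp [mul_comm]

lemma pw_deg {n m e : ℕ} (A : Fin n → Matrix (Fin e) (Fin e) ℂ)
    (a b : Fin e) (u v : Wd n m) : pw A a b u.1 v.1 ∈ degLE n (2 * m + 1) := by
  have := u.2
  have := v.2
  refine Submodule.add_mem _ (Submodule.smul_mem _ _ (word_mem _ ?_))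
    (Submodule.sum_mem _ fun k _ => Submodule.smul_mem _ _ (word_mem _ ?_)) <;> simp <;> omega

lemma pen_deg {n m d e : ℕ} (A : Fin n → Matrix (Fin e) (Fin e) ℂ)
    (y : Fin e × Fin d × Wd n m → ℂ) : matDegLE (pen A y) (2 * m + 1) := by
  intro i j
  rw [pen_apply]
  exact Submodule.sum_mem _ fun _ _ => Submodule.sum_mem _ fun _ _ => Submodule.sum_mem _ fun _ _ =>
    Submodule.sum_mem _ fun _ _ => Submodule.smul_mem _ _ (pw_deg _ _ _ _ _)

/-- Gram matrix -/
noncomputable def Gm {n d : ℕ} (m : ℕ) (l : Fin d → Fin d → List (Fin n) → ℂ) :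
    Matrix (Fin d × Wd n m) (Fin d × Wd n m) ℂ :=
  fun p q => l p.1 q.1 (p.2.1.reverse ++ q.2.1)

/-- shifted Gram matrix -/
noncomputable def Mm {n d : ℕ} (m : ℕ) (l : Fin d → Fin d → List (Fin n) → ℂ) (k : Fin n) :
    Matrix (Fin d × Wd n m) (Fin d × Wd n m) ℂ :=
  fun p q => l p.1 q.1 (p.2.1.reverse ++ k :: q.2.1)

/-- localizing matrix -/
noncomputable def Km {n d e : ℕ} (m : ℕ) (A : Fin n → Matrix (Fin e) (Fin e) ℂ)
    (l : Fin d → Fin d → List (Fin n) → ℂ) :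
    Matrix (Fin e × Fin d × Wd n m) (Fin e × Fin d × Wd n m) ℂ :=
  (1 : Matrix (Fin e) (Fin e) ℂ) ⊗ₖ Gm m l + ∑ k, A k ⊗ₖ Mm m l k

lemma Km_apply {n d e m : ℕ} (A : Fin n → Matrix (Fin e) (Fin e) ℂ)
    (l : Fin d → Fin d → List (Fin n) → ℂ) (a b : Fin e) (i j : Fin d) (u v : Wd n m) :
    Km m A l (a, i, u) (b, j, v) = Lam (l i j) (pw A a b u.1 v.1) := by
  simp [Km, pw, Matrix.sum_apply, Lam_word, Gm, Mm, Matrix.one_apply]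
  split_ifs <;> simp [Lam_word]

lemma LamM_pen {n d e m : ℕ} (A : Fin n → Matrix (Fin e) (Fin e) ℂ)
    (l : Fin d → Fin d → List (Fin n) → ℂ) (y : Fin e × Fin d × Wd n m → ℂ) :
    LamM l (pen A y) = star y ⬝ᵥ (Km m A l *ᵥ y) := by
  rw [LamM_apply]
  simp only [pen_apply, map_sum, map_smul, ← Km_apply]
  simp only [dotProduct, Matrix.mulVec, Fintype.sum_prod_type, Finset.mul_sum]
  rw [show (∑ i : Fin d, ∑ j : Fin d, ∑ a, ∑ u : Wd n m, ∑ b, ∑ v : Wd n m,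
      (starRingEnd ℂ (y (a, i, u)) * y (b, j, v)) • Km m A l (a, i, u) (b, j, v)) =
    ∑ i : Fin d, ∑ a, ∑ j : Fin d, ∑ u : Wd n m, ∑ b, ∑ v : Wd n m,
      (starRingEnd ℂ (y (a, i, u)) * y (b, j, v)) • Km m A l (a, i, u) (b, j, v) from
    Finset.sum_congr rfl fun i _ => Finset.sum_comm, Finset.sum_comm]
  refine Finset.sum_congr rfl fun a _ => Finset.sum_congr rfl fun i _ => ?_
  rw [Finset.sum_comm]
  refine Finset.sum_congr rfl fun u _ => ?_
  rw [Finset.sum_comm]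
  refine Finset.sum_congr rfl fun b _ => Finset.sum_congr rfl fun j _ =>
    Finset.sum_congr rfl fun v _ => ?_
  simp only [Pi.star_apply, smul_eq_mul]
  simp only [RCLike.star_def]
  ring

lemma exists_eps {κ : Type*} [Fintype κ] [DecidableEq κ] (B : Matrix κ κ ℂ)
    (hB : B.IsHermitian) : ∃ ε : ℝ, 0 < ε ∧ (1 + (ε : ℂ) • B).PosDef := by
  set C : ℝ := ∑ p, ∑ q, ‖B p q‖ with hC
  have hC0 : 0 ≤ C := Finset.sum_nonneg fun _ _ => Finset.sum_nonneg fun _ _ => norm_nonneg _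
  refine ⟨1 / (C + 1), by positivity, ?_⟩
  have hH : (1 + ((1 / (C + 1) : ℝ) : ℂ) • B).IsHermitian := by
    apply Matrix.IsHermitian.add Matrix.isHermitian_one
    unfold Matrix.IsHermitian
    rw [Matrix.conjTranspose_smul, hB.eq]
    simp
  refine Matrix.PosDef.of_dotProduct_mulVec_pos hH fun x hx => ?_
  have him := hH.im_star_dotProduct_mulVec_self x
  rw [RCLike.pos_iff]
  refine ⟨?_, him⟩
  set S : ℝ := ∑ p, ‖x p‖ ^ 2 with hS
  have hSx : ∀ p, ‖x p‖ ^ 2 ≤ S := fun p =>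
    Finset.single_le_sum (f := fun p => ‖x p‖ ^ 2) (fun _ _ => by positivity) (Finset.mem_univ p)
  have hSpos : 0 < S := by
    obtain ⟨p, hp⟩ := Function.ne_iff.1 hx
    have : 0 < ‖x p‖ := norm_pos_iff.2 hp
    exact lt_of_lt_of_le (by positivity) (hSx p)
  have h1 : star x ⬝ᵥ x = (S : ℂ) := by
    simp only [dotProduct, hS, Pi.star_apply, Complex.ofReal_sum]
    refine Finset.sum_congr rfl fun p _ => ?_
    rw [RCLike.star_def, Complex.conj_mul']
    simp
  have h2 : ‖star x ⬝ᵥ (B *ᵥ x)‖ ≤ C * S := by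
    simp only [dotProduct, Matrix.mulVec, Finset.mul_sum]
    refine (norm_sum_le _ _).trans ?_
    rw [hC, Finset.sum_mul]
    refine Finset.sum_le_sum fun p _ => (norm_sum_le _ _).trans ?_
    rw [Finset.sum_mul]
    refine Finset.sum_le_sum fun q _ => ?_
    rw [norm_mul, norm_mul, Pi.star_apply, norm_star]
    have : ‖x p‖ * ‖x q‖ ≤ S := by nlinarith [hSx p, hSx q, sq_nonneg (‖x p‖ - ‖x q‖)]
    nlinarith [norm_nonneg (B p q)]
  rw [Matrix.add_mulVec, Matrix.one_mulVec, Matrix.smul_mulVec, dotProduct_add, dotProduct_smul, h1]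
  simp only [smul_eq_mul, map_add, RCLike.re_to_complex, Complex.ofReal_re, Complex.re_ofReal_mul]
  have h3 := (abs_le.1 ((Complex.abs_re_le_norm _).trans h2)).1
  have h4 : (1 / (C + 1)) * (C * S) < S := by
    rw [div_mul_eq_mul_div, div_lt_iff₀ (by positivity)]
    nlinarith
  have h5 : (1 / (C + 1)) * (-(C * S)) ≤ (1 / (C + 1)) * (star x ⬝ᵥ (B *ᵥ x)).re :=
    mul_le_mul_of_nonneg_left h3 (by positivity)
  linarith

lemma prod_conjTranspose {n : ℕ} {κ : Type*} [Fintype κ] [DecidableEq κ]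
    (X : Fin n → Matrix κ κ ℂ) (hX : ∀ k, (X k).IsHermitian) (w : List (Fin n)) :
    ((w.map X).prod)ᴴ = (w.reverse.map X).prod := by
  induction w with
  | nil => simp
  | cons a w ih => simp [Matrix.conjTranspose_mul, ih, (hX a).eq]

/-- vector states -/
noncomputable def vs {n d : ℕ} {κ : Type*} [Fintype κ] [DecidableEq κ]
    (X : Fin n → Matrix κ κ ℂ) (ξ : Fin d → κ → ℂ) : Fin d → Fin d → List (Fin n) → ℂ :=
  fun i j w => star (ξ i) ⬝ᵥ ((w.map X).prod *ᵥ ξ j)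

/-- GNS map -/
noncomputable def Rm {n d : ℕ} (m : ℕ) {κ : Type*} [Fintype κ] [DecidableEq κ]
    (X : Fin n → Matrix κ κ ℂ) (ξ : Fin d → κ → ℂ) : Matrix κ (Fin d × Wd n m) ℂ :=
  fun p q => ((q.2.1.map X).prod *ᵥ ξ q.1) p

lemma Rm_mul {n d m : ℕ} {κ : Type*} [Fintype κ] [DecidableEq κ]
    (X : Fin n → Matrix κ κ ℂ) (hX : ∀ k, (X k).IsHermitian) (ξ : Fin d → κ → ℂ)
    (Y : Matrix κ κ ℂ) (p q : Fin d × Wd n m) :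
    ((Rm m X ξ)ᴴ * Y * Rm m X ξ) p q =
      star (ξ p.1) ⬝ᵥ (((p.2.1.reverse.map X).prod * Y * (q.2.1.map X).prod) *ᵥ ξ q.1) := by
  have h1 : ((Rm m X ξ)ᴴ * Y * Rm m X ξ) p q =
      star ((p.2.1.map X).prod *ᵥ ξ p.1) ⬝ᵥ (Y *ᵥ ((q.2.1.map X).prod *ᵥ ξ q.1)) := by
    rw [Matrix.mul_assoc, Matrix.mul_apply]
    rfl
  rw [h1, Matrix.star_mulVec, prod_conjTranspose X hX, ← Matrix.dotProduct_mulVec,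
    Matrix.mulVec_mulVec, Matrix.mulVec_mulVec, Matrix.mul_assoc]

lemma Km_vs {n d e m : ℕ} {κ : Type*} [Fintype κ] [DecidableEq κ]
    (A : Fin n → Matrix (Fin e) (Fin e) ℂ)
    (X : Fin n → Matrix κ κ ℂ) (hX : ∀ k, (X k).IsHermitian) (ξ : Fin d → κ → ℂ) :
    Km m A (vs X ξ) = ((1 : Matrix (Fin e) (Fin e) ℂ) ⊗ₖ Rm m X ξ)ᴴ *
      (1 + ∑ k, A k ⊗ₖ X k) * ((1 : Matrix (Fin e) (Fin e) ℂ) ⊗ₖ Rm m X ξ) := by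
  have h1 : Gm m (vs X ξ) = (Rm m X ξ)ᴴ * (1 : Matrix κ κ ℂ) * Rm m X ξ := by
    ext p q
    rw [Rm_mul X hX]
    simp [Gm, vs]
  have h2 : ∀ k, Mm m (vs X ξ) k = (Rm m X ξ)ᴴ * X k * Rm m X ξ := by
    intro k
    ext p q
    rw [Rm_mul X hX]
    simp [Mm, vs, Matrix.mul_assoc]
  rw [Km, h1, Matrix.conjTranspose_kronecker, ← Matrix.one_kronecker_one, Matrix.mul_add, Matrix.add_mul,
    Matrix.mul_sum, Matrix.sum_mul, ← Matrix.mul_kronecker_mul, ← Matrix.mul_kronecker_mul]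
  simp only [h2, ← Matrix.mul_kronecker_mul]
  simp

/-- Fock space matrices -/
noncomputable def Fk {n d m : ℕ} (ε : ℂ) (k : Fin n) :
    Matrix (Fin d × Wd n m) (Fin d × Wd n m) ℂ :=
  fun p q => if p.1 = q.1 ∧ (p.2.1 = k :: q.2.1 ∨ q.2.1 = k :: p.2.1) then ε else 0

lemma Fk_herm {n d m : ℕ} (ε : ℝ) (k : Fin n) : (Fk (d := d) (m := m) (ε : ℂ) k).IsHermitian := by
  ext p q
  simp only [Matrix.conjTranspose_apply, Fk]
  by_cases h : p.1 = q.1 ∧ (p.2.1 = k :: q.2.1 ∨ q.2.1 = k :: p.2.1)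
  · rw [if_pos h, if_pos ⟨h.1.symm, h.2.symm⟩]; simp
  · rw [if_neg h, if_neg (fun h' => h ⟨h'.1.symm, h'.2.symm⟩)]; simp

lemma Fk_prod {n d m : ℕ} (ε : ℂ) (j : Fin d) (v : List (Fin n)) (hv : v.length ≤ m) :
    ∀ p : Fin d × Wd n m, v.length ≤ p.2.1.length →
      (v.map (Fk (d := d) (m := m) ε)).prod p (j, ⟨[], Nat.zero_le _⟩) =
        if p = (j, ⟨v, hv⟩) then ε ^ v.length else 0 := by
  classical
  induction v with
  | nil => intro p _; simp [Matrix.one_apply]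
  | cons k v ih =>
    intro p hp
    have hv' : v.length ≤ m := by simp at hv; omega
    simp only [List.length_cons] at hp
    rw [List.map_cons, List.prod_cons, Matrix.mul_apply, Finset.sum_eq_single (j, ⟨v, hv'⟩)]
    · rw [ih hv' (j, ⟨v, hv'⟩) le_rfl, if_pos rfl]
      by_cases h : p = (j, ⟨k :: v, hv⟩)
      · subst h
        simp [Fk, pow_succ']
      · rw [if_neg h, Fk, if_neg, zero_mul]
        rintro ⟨h1, h2 | h2⟩
        · exact h (Prod.ext h1 (Subtype.ext h2))
        · have := congrArg List.length h2
          simp at this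
          omega
    · intro q _ hq
      by_cases h : p.1 = q.1 ∧ (p.2.1 = k :: q.2.1 ∨ q.2.1 = k :: p.2.1)
      · rw [ih hv' q, if_neg hq, mul_zero]
        rcases h.2 with h2 | h2 <;> have := congrArg List.length h2 <;> simp at this <;> omega
      · rw [Fk, if_neg h, zero_mul]
    · simp

/-- vacuum vectors -/
noncomputable def vac {n d m : ℕ} (i : Fin d) : Fin d × Wd n m → ℂ :=
  open Classical in Pi.single (i, ⟨[], Nat.zero_le _⟩) 1

open Classical in
lemma Rm_Fk_inj {n d m : ℕ} (ε : ℂ) (hε : ε ≠ 0) :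
    Function.Injective (Rm m (Fk (n := n) (d := d) (m := m) ε) vac).mulVec := by
  have hR : ∀ p q : Fin d × Wd n m, q.2.1.length ≤ p.2.1.length →
      Rm m (Fk (n := n) (d := d) (m := m) ε) vac p q = if p = q then ε ^ q.2.1.length else 0 := by
    intro p q h
    rw [Rm, vac, Matrix.mulVec_single_one, Matrix.col_apply]
    exact Fk_prod ε q.1 q.2.1 q.2.2 p h
  rw [← Matrix.coe_mulVecLin, injective_iff_map_eq_zero]
  intro x hx
  by_contra hne
  obtain ⟨q0, hq0⟩ := Function.ne_iff.1 hne
  obtain ⟨p, hp, hmax⟩ := Finset.exists_max_image (Finset.univ.filter fun q => x q ≠ 0)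
    (fun q => q.2.1.length) ⟨q0, by simpa using hq0⟩
  simp only [Finset.mem_filter, Finset.mem_univ, true_and] at hp hmax
  have := congrFun hx p
  simp only [Matrix.mulVecLin_apply, Matrix.mulVec, dotProduct, Pi.zero_apply] at this
  rw [Finset.sum_eq_single p] at this
  · rw [hR p p le_rfl, if_pos rfl] at this
    simp [hε, hp] at this
  · intro q _ hq
    by_cases h : x q = 0
    · simp [h]
    · rw [hR p q (hmax q h), if_neg (Ne.symm hq), zero_mul]
  · simp

lemma one_kron_inj {e : ℕ} {κ τ : Type*} [Fintype κ] [Fintype τ] (R : Matrix κ τ ℂ)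
    (hR : Function.Injective R.mulVec) :
    Function.Injective ((1 : Matrix (Fin e) (Fin e) ℂ) ⊗ₖ R).mulVec := by
  have key : ∀ (x : Fin e × τ → ℂ) a p,
      (((1 : Matrix (Fin e) (Fin e) ℂ) ⊗ₖ R) *ᵥ x) (a, p) = (R *ᵥ fun q => x (a, q)) p := by
    intro x a p
    simp [Matrix.mulVec, dotProduct, Fintype.sum_prod_type, Matrix.one_apply]
  intro x y h
  ext ⟨a, q⟩
  have : (fun q => x (a, q)) = fun q => y (a, q) := by
    apply hR
    ext p
    rw [← key, ← key, h]
  exact congrFun this q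

/-- A strictly positive functional. -/
lemma exists_strict {n e : ℕ} (d m : ℕ) (A : Fin n → Matrix (Fin e) (Fin e) ℂ)
    (hA : ∀ j, (A j).IsHermitian) : ∃ l : Fin d → Fin d → List (Fin n) → ℂ,
      (Km m A l).PosDef ∧ (Km m (fun _ => (0 : Matrix (Fin 1) (Fin 1) ℂ)) l).PosDef := by
  classical
  have hher : (∑ k, A k ⊗ₖ (Fk (n := n) (d := d) (m := m) 1 k)).IsHermitian := by
    unfold Matrix.IsHermitian
    rw [Matrix.conjTranspose_sum]
    refine Finset.sum_congr rfl fun k _ => ?_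
    rw [Matrix.conjTranspose_kronecker, (hA k).eq]
    congr 1
    exact_mod_cast (Fk_herm (n := n) (d := d) (m := m) 1 k).eq
  obtain ⟨ε, hε, hpos⟩ := exists_eps _ hher
  have hX : ∀ k, (Fk (n := n) (d := d) (m := m) (ε : ℂ) k).IsHermitian := Fk_herm ε
  have hinj := Rm_Fk_inj (n := n) (d := d) (m := m) (ε : ℂ) (by exact_mod_cast hε.ne')
  have hsc : ∀ k, Fk (n := n) (d := d) (m := m) (ε : ℂ) k = (ε : ℂ) • Fk 1 k := by
    intro k; ext p q; simp [Fk]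
  refine ⟨vs (Fk (m := m) (ε : ℂ)) vac, ?_, ?_⟩
  · rw [Km_vs A _ hX]
    refine Matrix.PosDef.conjTranspose_mul_mul_same ?_ (one_kron_inj _ hinj)
    convert hpos using 2
    rw [Finset.smul_sum]
    refine Finset.sum_congr rfl fun k _ => ?_
    rw [hsc, Matrix.kronecker_smul]
  · rw [Km_vs _ _ hX]
    refine Matrix.PosDef.conjTranspose_mul_mul_same ?_ (one_kron_inj _ hinj)
    simpa using Matrix.PosDef.one

open scoped MatrixOrder Matrix.Norms.L2Operator in
lemma exists_chol {κ : Type*} [Fintype κ] [DecidableEq κ] {G : Matrix κ κ ℂ}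
    (hG : G.PosSemidef) : ∃ B : Matrix κ κ ℂ, G = Bᴴ * B := by
  obtain ⟨B, hB⟩ := CStarAlgebra.nonneg_iff_eq_star_mul_self.mp hG.nonneg
  exact ⟨B, hB⟩

lemma gns0 {n d e m : ℕ} (A : Fin n → Matrix (Fin e) (Fin e) ℂ)
    (l : Fin d → Fin d → List (Fin n) → ℂ)
    (hl : ∀ i j w, l j i w.reverse = starRingEnd ℂ (l i j w))
    (hG : (Gm m l).PosDef) (hK : (Km m A l).PosSemidef) [DecidableEq (Fin d × Wd n m)] :
    ∃ (X : Fin n → Matrix (Fin d × Wd n m) (Fin d × Wd n m) ℂ) (ξ : Fin d → Fin d × Wd n m → ℂ),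
      (∀ k, (X k).IsHermitian) ∧ (1 + ∑ k, A k ⊗ₖ X k).PosSemidef ∧
      ∀ i j w, w.length ≤ 2 * m + 1 → vs X ξ i j w = l i j w := by
  obtain ⟨B, hB⟩ := exists_chol hG.posSemidef
  have hBu : IsUnit B.det := by
    have := (Matrix.isUnit_iff_isUnit_det _).1 hG.isUnit
    rw [hB, Matrix.det_mul] at this
    exact isUnit_of_mul_isUnit_right this
  have hBB : B * B⁻¹ = 1 := Matrix.mul_nonsing_inv _ hBu
  have hB'B : B⁻¹ * B = 1 := Matrix.nonsing_inv_mul _ hBu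
  have hBh : (B⁻¹)ᴴ * Bᴴ = 1 := by rw [← Matrix.conjTranspose_mul, hBB, Matrix.conjTranspose_one]
  have hM : ∀ k, (Mm m l k)ᴴ = Mm m l k := by
    intro k
    ext p q
    simp only [Matrix.conjTranspose_apply, Mm, RCLike.star_def]
    rw [← hl]
    simp
  set X : Fin n → Matrix (Fin d × Wd n m) (Fin d × Wd n m) ℂ :=
    fun k => (B⁻¹)ᴴ * Mm m l k * B⁻¹ with hXdef
  have hX : ∀ k, (X k).IsHermitian := by
    intro k
    simp only [hXdef, Matrix.IsHermitian, Matrix.conjTranspose_mul, Matrix.conjTranspose_conjTranspose,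
      hM, Matrix.mul_assoc]
  set ξ : Fin d → Fin d × Wd n m → ℂ := fun i => B *ᵥ Pi.single (i, ⟨[], Nat.zero_le _⟩) 1 with hξ
  refine ⟨X, ξ, hX, ?_, ?_⟩
  · have := hK.conjTranspose_mul_mul_same ((1 : Matrix (Fin e) (Fin e) ℂ) ⊗ₖ B⁻¹)
    convert this using 1
    rw [Km, Matrix.conjTranspose_kronecker, mul_add, add_mul, Finset.mul_sum, Finset.sum_mul]
    simp only [← Matrix.mul_kronecker_mul, Matrix.conjTranspose_one, Matrix.one_mul, Matrix.mul_one]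
    congr 1
    rw [hB, ← Matrix.mul_assoc, hBh, Matrix.one_mul, hBB, Matrix.one_kronecker_one]
  · -- the action on words
    have hact : ∀ (v : List (Fin n)) (hv : v.length ≤ m) (j : Fin d),
        (v.map X).prod *ᵥ ξ j = B *ᵥ Pi.single (j, ⟨v, hv⟩) 1 := by
      intro v
      induction v with
      | nil => intro _ j; simp [hξ]
      | cons k v ih =>
        intro hv j
        have hv' : v.length ≤ m := by simp at hv; omega
        rw [List.map_cons, List.prod_cons, ← Matrix.mulVec_mulVec, ih hv' j]
        have hcol : Mm m l k *ᵥ Pi.single (j, ⟨v, hv'⟩) 1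
            = Gm m l *ᵥ Pi.single (j, ⟨k :: v, hv⟩) 1 := by
          rw [Matrix.mulVec_single_one, Matrix.mulVec_single_one]
          rfl
        rw [Matrix.mulVec_mulVec, hXdef]
        simp only
        rw [Matrix.mul_assoc, hB'B, Matrix.mul_one, ← Matrix.mulVec_mulVec, hcol, hB,
          Matrix.mulVec_mulVec, ← Matrix.mul_assoc, hBh, Matrix.one_mul]
    have hR : Rm m X ξ = B := by
      ext p q
      rw [Rm, hact q.2.1 q.2.2 q.1, Matrix.mulVec_single_one]
      rfl
    intro i j w hw
    by_cases hwm : w.length ≤ 2 * m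
    · set u : Wd n m := ⟨(w.take m).reverse, by simp⟩
      set v : Wd n m := ⟨w.drop m, by simp; omega⟩
      have h1 := Rm_mul X hX ξ 1 (i, u) (j, v)
      rw [hR, Matrix.mul_one, ← hB, Matrix.mul_one, ← List.prod_append, ← List.map_append] at h1
      have h2 : u.1.reverse ++ v.1 = w := by simp [u, v]
      simp only [h2] at h1
      rw [vs, ← h1, Gm]
      simp only [h2]
    · have hw' : w.length = 2 * m + 1 := by omega
      obtain ⟨k, t, ht⟩ : ∃ k t, w.drop m = k :: t := by
        cases h : w.drop m with
        | nil => simp at h; omega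
        | cons k t => exact ⟨k, t, rfl⟩
      have htl : t.length ≤ m := by
        have := congrArg List.length ht
        simp at this; omega
      set u : Wd n m := ⟨(w.take m).reverse, by simp⟩
      set v : Wd n m := ⟨t, htl⟩
      have h1 := Rm_mul X hX ξ (X k) (i, u) (j, v)
      have h3 : Bᴴ * X k * B = Mm m l k := by
        have hBh' : Bᴴ * (B⁻¹)ᴴ = 1 := by
          rw [← Matrix.conjTranspose_mul, hB'B, Matrix.conjTranspose_one]
        simp only [hXdef]
        rw [← Matrix.mul_assoc, ← Matrix.mul_assoc, hBh', Matrix.one_mul, Matrix.mul_assoc, hB'B,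
          Matrix.mul_one]
      have h2 : u.1.reverse ++ k :: v.1 = w := by simp [u, v, ← ht]
      rw [hR, h3, Matrix.mul_assoc, ← List.prod_cons, ← List.map_cons, ← List.prod_append,
        ← List.map_append] at h1
      simp only [h2] at h1
      rw [vs, ← h1, Mm]
      simp only [h2]

lemma gns {n d e m : ℕ} (A : Fin n → Matrix (Fin e) (Fin e) ℂ)
    (l : Fin d → Fin d → List (Fin n) → ℂ)
    (hl : ∀ i j w, l j i w.reverse = starRingEnd ℂ (l i j w))
    (hG : (Gm m l).PosDef) (hK : (Km m A l).PosSemidef) :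
    ∃ (k : ℕ) (X : Fin n → Matrix (Fin k) (Fin k) ℂ) (ξ : Fin d → Fin k → ℂ),
      (∀ k, (X k).IsHermitian) ∧ (monicK A X).PosSemidef ∧
      ∀ i j w, w.length ≤ 2 * m + 1 → vs X ξ i j w = l i j w := by
  classical
  obtain ⟨X, ξ, h1, h2, h3⟩ := gns0 A l hl hG hK
  let E := Fintype.equivFin (Fin d × Wd n m)
  refine ⟨_, fun k => (X k).submatrix E.symm E.symm, fun i => ξ i ∘ E.symm, ?_, ?_, ?_⟩
  · intro k
    exact (h1 k).submatrix _
  · have := h2.submatrix (Prod.map id E.symm : Fin e × Fin (Fintype.card (Fin d × Wd n m)) → _)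
    convert this using 1
    ext ⟨a, p⟩ ⟨b, q⟩
    simp [monicK, Matrix.sum_apply, Matrix.one_apply]
  · intro i j w hw
    rw [← h3 i j w hw, vs, vs]
    have : (w.map fun k => (X k).submatrix E.symm E.symm).prod
        = ((w.map X).prod).submatrix E.symm E.symm := by
      have := map_list_prod (Matrix.reindexAlgEquiv ℂ ℂ E) (w.map X)
      simp only [Matrix.coe_reindexAlgEquiv, Matrix.reindex_apply, List.map_map] at this
      rw [this]
      rfl
    rw [this, Matrix.submatrix_mulVec_equiv]
    simp only [Equiv.symm_symm, Function.comp_assoc, Equiv.symm_comp_self, Function.comp_id]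
    exact comp_equiv_dotProduct_comp_equiv (star (ξ i)) _ E.symm

lemma eval_vs {n d k δ : ℕ} (X : Fin n → Matrix (Fin k) (Fin k) ℂ) (ξ : Fin d → Fin k → ℂ)
    (l : Fin d → Fin d → List (Fin n) → ℂ)
    (h : ∀ i j w, w.length ≤ δ → vs X ξ i j w = l i j w)
    (f : Matrix (Fin d) (Fin d) (FreeAlg n)) (hf : matDegLE f δ) :
    star (fun p : Fin d × Fin k => ξ p.1 p.2) ⬝ᵥ (evalM f X *ᵥ fun p => ξ p.1 p.2) = LamM l f := by
  rw [LamM_apply]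
  have h1 : ∀ i j, Lam (l i j) (f i j)
      = star (ξ i) ⬝ᵥ (FreeAlgebra.lift ℂ X (f i j) *ᵥ ξ j) := by
    intro i j
    rw [eq_sum (hf i j)]
    simp only [map_sum, map_smul, Lam_word, lift_word, Matrix.sum_mulVec, Matrix.smul_mulVec,
      dotProduct_sum, dotProduct_smul]
    refine Finset.sum_congr rfl fun w _ => ?_
    rw [← h i j w.1 w.2, vs]
  simp only [h1, dotProduct, Matrix.mulVec, Fintype.sum_prod_type, evalM, Pi.star_apply]
  refine Finset.sum_congr rfl fun i _ => ?_
  rw [Finset.sum_comm]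
  refine Finset.sum_congr rfl fun p _ => ?_
  rw [Finset.mul_sum]

lemma isCompact_hull {V : Type*} [NormedAddCommGroup V] [NormedSpace ℝ V] [FiniteDimensional ℝ V]
    {S : Set V} (hS : IsCompact S) : IsCompact (convexHull ℝ S) := by
  rcases S.eq_empty_or_nonempty with rfl | ⟨s0, hs0⟩
  · simp
  set N := Module.finrank ℝ V + 1 with hN
  have hc : IsCompact ((stdSimplex ℝ (Fin N)) ×ˢ (Set.univ.pi fun _ : Fin N => S)) :=
    (isCompact_stdSimplex ℝ (Fin N)).prod (isCompact_univ_pi fun _ => hS)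
  have hcont : Continuous fun p : (Fin N → ℝ) × (Fin N → V) => ∑ i, p.1 i • p.2 i := by
    fun_prop
  convert hc.image hcont using 1
  apply Set.Subset.antisymm
  · intro x hx
    obtain ⟨ι, _, z, w, hz, haff, hw, hw1, hx⟩ := eq_pos_convex_span_of_mem_convexHull hx
    have hcard : Fintype.card ι ≤ Fintype.card (Fin N) := by
      rw [Fintype.card_fin]
      exact haff.card_le_finrank_succ.trans (Nat.succ_le_succ (Submodule.finrank_le _))
    obtain ⟨g⟩ := Function.Embedding.nonempty_of_card_le hcard
    have hgw : ∀ i, Function.extend g w 0 (g i) = w i := g.injective.extend_apply _ _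
    have hgz : ∀ i, Function.extend g z (fun _ => s0) (g i) = z i := g.injective.extend_apply _ _
    have hgw' : ∀ k, k ∉ Set.range g → Function.extend g w 0 k = 0 := fun k hk =>
      Function.extend_apply' _ _ _ (by simpa using hk)
    have hgz' : ∀ k, k ∉ Set.range g → Function.extend g z (fun _ => s0) k = s0 := fun k hk =>
      Function.extend_apply' _ _ _ (by simpa using hk)
    refine ⟨(Function.extend g w 0, Function.extend g z (fun _ => s0)), ⟨⟨?_, ?_⟩, ?_⟩, ?_⟩
    · intro k
      by_cases hk : k ∈ Set.range g
      · obtain ⟨i, rfl⟩ := hk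
        simp only [hgw]; exact (hw i).le
      · simp only [hgw' k hk]; exact le_rfl
    · rw [← hw1]
      exact (Fintype.sum_of_injective g g.injective _ _ hgw' fun i => (hgw i).symm).symm
    · intro k _
      by_cases hk : k ∈ Set.range g
      · obtain ⟨i, rfl⟩ := hk
        simp only [hgz]; exact hz ⟨i, rfl⟩
      · simp only [hgz' k hk]; exact hs0
    · rw [← hx]
      refine (Fintype.sum_of_injective g g.injective _ _ ?_ ?_).symm
      · intro k hk; simp [hgw' k hk]
      · intro i; simp [hgw, hgz]
  · rintro _ ⟨⟨w, z⟩, ⟨⟨h1, h2⟩, h3⟩, rfl⟩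
    exact (convex_convexHull ℝ S).sum_mem (fun i _ => h1 i) h2
      fun i _ => subset_convexHull ℝ S (h3 i trivial)

/-- real coordinates of hermitian matrix polynomials -/
noncomputable def T {n d : ℕ} (δ : ℕ) (F : Matrix (Fin d) (Fin d) (FreeAlg n)) :
    (Fin d × Fin d × Wd n δ) → ℝ :=
  fun a => (coef a.2.2.1 (F a.1 a.2.1)).re + (coef a.2.2.1 (F a.1 a.2.1)).im

lemma T_sum {n d δ : ℕ} {ι : Type*} [Fintype ι] (c : ι → ℝ)
    (g : ι → Matrix (Fin d) (Fin d) (FreeAlg n)) :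
    T δ (∑ i, (c i : ℂ) • g i) = ∑ i, c i • T δ (g i) := by
  ext a
  simp [T, Matrix.sum_apply, Finset.sum_apply, mul_add, Finset.sum_add_distrib]

lemma coef_herm {n d : ℕ} {F : Matrix (Fin d) (Fin d) (FreeAlg n)} (hF : IsHermPoly F)
    (i j : Fin d) (w : List (Fin n)) :
    coef w.reverse (F j i) = starRingEnd ℂ (coef w (F i j)) := by
  rw [hF j i, coef_nstar, List.reverse_reverse]

lemma T_inj {n d δ : ℕ} {F F' : Matrix (Fin d) (Fin d) (FreeAlg n)} (hF : IsHermPoly F)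
    (hF' : IsHermPoly F') (hd : matDegLE F δ) (hd' : matDegLE F' δ) (h : T δ F = T δ F') :
    F = F' := by
  ext i j
  apply coef_ext
  intro w
  by_cases hw : w.length ≤ δ
  · have h1 := congrFun h (i, j, ⟨w, hw⟩)
    have h2 := congrFun h (j, i, ⟨w.reverse, by simpa using hw⟩)
    simp only [T, coef_herm hF, coef_herm hF', Complex.conj_re, Complex.conj_im] at h1 h2
    apply Complex.ext <;> linarith
  · rw [mem_degLE_iff.1 (hd i j) w (by omega), mem_degLE_iff.1 (hd' i j) w (by omega)]

/-- swapping involution of the index set -/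
def sw {n d δ : ℕ} : (Fin d × Fin d × Wd n δ) ≃ (Fin d × Fin d × Wd n δ) where
  toFun a := (a.2.1, a.1, ⟨a.2.2.1.reverse, by simpa using a.2.2.2⟩)
  invFun a := (a.2.1, a.1, ⟨a.2.2.1.reverse, by simpa using a.2.2.2⟩)
  left_inv a := by simp
  right_inv a := by simp

lemma exists_lam {n d δ : ℕ} (φ : ((Fin d × Fin d × Wd n δ) → ℝ) →ₗ[ℝ] ℝ) :
    ∃ l : Fin d → Fin d → List (Fin n) → ℂ,
      (∀ i j w, l j i w.reverse = starRingEnd ℂ (l i j w)) ∧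
      ∀ F, IsHermPoly F → matDegLE F δ → φ (T δ F) = (LamM l F).re := by
  classical
  let c : Fin d → Fin d → List (Fin n) → ℝ := fun i j w =>
    if h : w.length ≤ δ then φ (Pi.single (i, j, ⟨w, h⟩) 1) else 0
  have hc : ∀ a : Fin d × Fin d × Wd n δ, c a.1 a.2.1 a.2.2.1 = φ (Pi.single a 1) := by
    intro a
    simp only [c]
    rw [dif_pos a.2.2.2]
  refine ⟨fun i j w => ((c i j w : ℂ) * (1 - Complex.I) +
    (c j i w.reverse : ℂ) * (1 + Complex.I)) / 2, ?_, ?_⟩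
  · intro i j w
    simp only [List.reverse_reverse, map_div₀, map_add, map_mul, map_sub, map_one,
      Complex.conj_ofReal, Complex.conj_I, map_ofNat]
    ring
  · intro F hF hd
    have h1 : φ (T δ F) = ∑ a, T δ F a * c a.1 a.2.1 a.2.2.1 := by
      conv_lhs => rw [LinearMap.pi_apply_eq_sum_univ φ (T δ F)]
      refine Finset.sum_congr rfl fun a _ => ?_
      rw [hc, smul_eq_mul]
      congr 2
      ext b
      simp [Pi.single_apply, eq_comm]
    have h2 : ∀ a : Fin d × Fin d × Wd n δ,
        (coef a.2.2.1 (F a.1 a.2.1) * (((c a.1 a.2.1 a.2.2.1 : ℂ) * (1 - Complex.I) +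
          (c a.2.1 a.1 a.2.2.1.reverse : ℂ) * (1 + Complex.I)) / 2)).re =
        (T δ F a * c a.1 a.2.1 a.2.2.1) / 2
        + (T δ F (sw a) * c (sw a).1 (sw a).2.1 (sw a).2.2.1) / 2 := by
      intro a
      simp only [T, sw, Equiv.coe_fn_mk, coef_herm hF, Complex.conj_re, Complex.conj_im]
      rw [← mul_div_assoc, show (2 : ℂ) = ((2 : ℝ) : ℂ) by norm_num, Complex.div_ofReal_re]
      simp
      ring
    rw [h1, LamM_apply]
    have h3 : ∀ (l : Fin d → Fin d → List (Fin n) → ℂ), ∑ i, ∑ j, Lam (l i j) (F i j)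
        = ∑ a : Fin d × Fin d × Wd n δ, coef a.2.2.1 (F a.1 a.2.1) * l a.1 a.2.1 a.2.2.1 := by
      intro l
      simp only [Fintype.sum_prod_type]
      refine Finset.sum_congr rfl fun i _ => Finset.sum_congr rfl fun j _ => ?_
      conv_lhs => rw [eq_sum (hd i j)]
      simp [Lam_word]
    rw [h3, Complex.re_sum]
    simp only [h2]
    rw [Finset.sum_add_distrib, Equiv.sum_comp sw
      (fun a : Fin d × Fin d × Wd n δ => (T δ F a * c a.1 a.2.1 a.2.2.1) / 2),
      ← Finset.sum_add_distrib]
    refine Finset.sum_congr rfl fun a _ => ?_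
    ring

lemma pen_smul {n m d e : ℕ} (A : Fin n → Matrix (Fin e) (Fin e) ℂ)
    (y : Fin e × Fin d × Wd n m → ℂ) (r : ℝ) :
    pen A ((r : ℂ) • y) = ((r ^ 2 : ℝ) : ℂ) • pen A y := by
  ext i j
  rw [Matrix.smul_apply, pen_apply, pen_apply]
  simp only [Finset.smul_sum, smul_smul]
  refine Finset.sum_congr rfl fun a _ => Finset.sum_congr rfl fun u _ =>
    Finset.sum_congr rfl fun b _ => Finset.sum_congr rfl fun v _ => ?_
  congr 1
  simp
  ring

lemma T_pen_cont {n m d e δ : ℕ} (A : Fin n → Matrix (Fin e) (Fin e) ℂ) :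
    Continuous fun y : Fin e × Fin d × Wd n m → ℂ => T δ (pen A y) := by
  refine continuous_pi fun a => ?_
  simp only [T, pen_apply, map_sum, map_smul, smul_eq_mul]
  have : Continuous fun y : Fin e × Fin d × Wd n m → ℂ =>
    ∑ x, ∑ u : Wd n m, ∑ b, ∑ v : Wd n m, (starRingEnd ℂ) (y (x, a.1, u)) * y (b, a.2.1, v) *
      coef a.2.2.1 (pw A x b u.1 v.1) := by fun_prop
  exact (Complex.continuous_re.comp this).add (Complex.continuous_im.comp this)

lemma Km_herm {n d e m : ℕ} (A : Fin n → Matrix (Fin e) (Fin e) ℂ)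
    (hA : ∀ j, (A j).IsHermitian) (l : Fin d → Fin d → List (Fin n) → ℂ)
    (hl : ∀ i j w, l j i w.reverse = starRingEnd ℂ (l i j w)) : (Km m A l).IsHermitian := by
  have hM : ∀ k, (Mm m l k)ᴴ = Mm m l k := by
    intro k
    ext p q
    simp only [Matrix.conjTranspose_apply, Mm, RCLike.star_def]
    rw [← hl]
    simp
  have hG : (Gm m l)ᴴ = Gm m l := by
    ext p q
    simp only [Matrix.conjTranspose_apply, Gm, RCLike.star_def]
    rw [← hl]
    simp
  unfold Matrix.IsHermitian
  simp only [Km, Matrix.conjTranspose_add, Matrix.conjTranspose_sum, Matrix.conjTranspose_kronecker,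
    hM, hG, (hA _).eq, Matrix.conjTranspose_one]

lemma Km_posDef {n d e m : ℕ} (A : Fin n → Matrix (Fin e) (Fin e) ℂ)
    (hA : ∀ j, (A j).IsHermitian) (l : Fin d → Fin d → List (Fin n) → ℂ)
    (hl : ∀ i j w, l j i w.reverse = starRingEnd ℂ (l i j w))
    (hpos : ∀ y : Fin e × Fin d × Wd n m → ℂ, ‖y‖ = 1 → 0 < (LamM l (pen A y)).re) :
    (Km m A l).PosDef := by
  have hH := Km_herm (m := m) A hA l hl
  refine Matrix.PosDef.of_dotProduct_mulVec_pos hH fun y hy => ?_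
  rw [RCLike.pos_iff]
  refine ⟨?_, hH.im_star_dotProduct_mulVec_self y⟩
  rw [← LamM_pen, RCLike.re_to_complex]
  have hn : 0 < ‖y‖ := norm_pos_iff.2 hy
  have h1 : y = ((‖y‖ : ℝ) : ℂ) • (((‖y‖⁻¹ : ℝ) : ℂ) • y) := by
    rw [smul_smul, ← Complex.ofReal_mul, mul_inv_cancel₀ hn.ne']
    simp
  have h2 : ‖((‖y‖⁻¹ : ℝ) : ℂ) • y‖ = 1 := by
    rw [norm_smul, Complex.norm_real, norm_inv, norm_norm, inv_mul_cancel₀ hn.ne']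
  rw [h1, pen_smul, map_smul, smul_eq_mul, Complex.re_ofReal_mul]
  exact mul_pos (by positivity) (hpos _ h2)

lemma pen_zero_eq {n m d : ℕ} (y : Fin 1 × Fin d × Wd n m → ℂ) :
    ∃ s : Matrix (Fin d) (Fin d) (FreeAlg n), matDegLE s m ∧
      pen (fun _ => (0 : Matrix (Fin 1) (Fin 1) ℂ)) y = adjM s * s := by
  cases d with
  | zero => exact ⟨0, fun i => i.elim0, Subsingleton.elim _ _⟩
  | succ d =>
    refine ⟨Matrix.of fun i j => if i = 0 then rowm y 0 j else 0, fun i j => ?_, ?_⟩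
    · by_cases h : i = 0
      · simp only [Matrix.of_apply, h, if_true]; exact rowm_deg y 0 j
      · simp only [Matrix.of_apply, h, if_false]; exact Submodule.zero_mem _
    · ext i j
      have : monicPoly (fun _ : Fin n => (0 : Matrix (Fin 1) (Fin 1) ℂ)) = 1 := by
        ext a b
        simp [monicPoly]
      rw [pen, this, Matrix.mul_one, Matrix.mul_apply, Matrix.mul_apply,
        Finset.sum_eq_single (0 : Fin (d + 1))]
      · simp [adjM]
      · intro k _ hk
        simp [hk]
      · simp

lemma pack {n d e m : ℕ} (A : Fin n → Matrix (Fin e) (Fin e) ℂ) {ι : Type*} [Fintype ι]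
    (G : ι → Matrix (Fin d) (Fin d) (FreeAlg n))
    (h : ∀ i, (∃ s : Matrix (Fin d) (Fin d) (FreeAlg n), matDegLE s m ∧ G i = adjM s * s) ∨
      (∃ v : Matrix (Fin e) (Fin d) (FreeAlg n), matDegLE v m ∧
        G i = adjM v * monicPoly A * v)) :
    ∃ (M N : ℕ) (s : Fin M → Matrix (Fin d) (Fin d) (FreeAlg n))
        (v : Fin N → Matrix (Fin e) (Fin d) (FreeAlg n)),
      (∀ i, matDegLE (s i) m) ∧ (∀ j, matDegLE (v j) m) ∧
      ∑ i, G i = ∑ i, adjM (s i) * s i + ∑ j, adjM (v j) * monicPoly A * v j ∧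
      M + N = Fintype.card ι := by
  classical
  let p : ι → Prop := fun i =>
    ∃ s : Matrix (Fin d) (Fin d) (FreeAlg n), matDegLE s m ∧ G i = adjM s * s
  have h' : ∀ i : {i // ¬ p i}, ∃ v : Matrix (Fin e) (Fin d) (FreeAlg n), matDegLE v m ∧
        G i = adjM v * monicPoly A * v := fun i => (h i.1).resolve_left i.2
  have h'' : ∀ i : {i // p i}, ∃ s : Matrix (Fin d) (Fin d) (FreeAlg n), matDegLE s m ∧
        G i = adjM s * s := fun i => i.2
  choose v hv hv' using h'
  choose s hs hs' using h''
  let E1 := Fintype.equivFin {i // p i}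
  let E2 := Fintype.equivFin {i // ¬ p i}
  refine ⟨_, _, fun k => s (E1.symm k), fun k => v (E2.symm k), fun _ => hs _, fun _ => hv _, ?_, ?_⟩
  · rw [← Fintype.sum_subtype_add_sum_subtype p G]
    rw [Equiv.sum_comp E1.symm (fun i => adjM (s i) * s i),
      Equiv.sum_comp E2.symm (fun i => adjM (v i) * monicPoly A * v i)]
    simp only [← hs', ← hv']
  · exact Fintype.card_subtype_compl p ▸ by
      have := Fintype.card_subtype_le p
      omega

end CB

/-- Carathéodory-type bound: if `f ⪰ 0` on `D_L` then `f` admits a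
certificate `f = ∑ᵢ sᵢ*sᵢ + ∑ⱼ vⱼ*Lvⱼ` with degrees at most `⌊deg f / 2⌋` and at most
`1 + d² ∑_{j=0}^{deg f + 1} nʲ` terms. -/
theorem caratheodory_bound_positivstellensatz {n d e : ℕ}
    (f : Matrix (Fin d) (Fin d) (FreeAlg n)) (hf : IsHermPoly f)
    (A : Fin n → Matrix (Fin e) (Fin e) ℂ) (hA : ∀ j, (A j).IsHermitian)
    (hpos : ∀ (k : ℕ) (X : Fin n → Matrix (Fin k) (Fin k) ℂ), (∀ j, (X j).IsHermitian) →
      (monicK A X).PosSemidef → (evalM f X).PosSemidef) :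
    ∃ (M N : ℕ) (s : Fin M → Matrix (Fin d) (Fin d) (FreeAlg n))
        (v : Fin N → Matrix (Fin e) (Fin d) (FreeAlg n)),
      (∀ i, matDegLE (s i) (matDeg f / 2)) ∧
      (∀ j, matDegLE (v j) (matDeg f / 2)) ∧
      f = ∑ i, adjM (s i) * s i + ∑ j, adjM (v j) * monicPoly A * v j ∧
      M + N ≤ 1 + d ^ 2 * ∑ j ∈ Finset.range (matDeg f + 2), n ^ j := by
  classical
  set m := matDeg f / 2 with hm
  set δ := 2 * m + 1 with hδ
  have hfdeg : matDegLE f δ := fun i j => CB.degLE_mono (by omega) (CB.matDeg_spec f i j)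
  by_cases hf0 : f = 0
  · refine ⟨0, 0, Fin.elim0, Fin.elim0, fun i => i.elim0, fun i => i.elim0, ?_, ?_⟩
    · simp [hf0]
    · omega
  have hzero : IsHermPoly (0 : Matrix (Fin d) (Fin d) (FreeAlg n)) := fun i j => by
    simp [CB.nstar_zero]
  have hzerod : matDegLE (0 : Matrix (Fin d) (Fin d) (FreeAlg n)) δ := fun i j =>
    Submodule.zero_mem _
  have hT0 : CB.T δ (0 : Matrix (Fin d) (Fin d) (FreeAlg n)) = 0 := by
    ext a; simp [CB.T]
  have hTf : CB.T δ f ≠ 0 := fun h => hf0 (CB.T_inj hf hzero hfdeg hzerod (h.trans hT0.symm))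
  set A0 : Fin n → Matrix (Fin 1) (Fin 1) ℂ := fun _ => 0 with hA0
  have hA0h : ∀ j, (A0 j).IsHermitian := fun j => Matrix.isHermitian_zero
  set S1 := (fun y : Fin e × Fin d × CB.Wd n m → ℂ => CB.T δ (CB.pen A y)) '' Metric.sphere 0 1
    with hS1
  set S0 := (fun y : Fin 1 × Fin d × CB.Wd n m → ℂ => CB.T δ (CB.pen A0 y)) '' Metric.sphere 0 1
    with hS0
  have hScomp : IsCompact (S1 ∪ S0) :=
    ((isCompact_sphere _ _).image (CB.T_pen_cont A)).union
      ((isCompact_sphere _ _).image (CB.T_pen_cont A0))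
  -- the convex hull of the generators meets the ray through `f`
  have hmeet : ∃ t : ℝ, 0 ≤ t ∧ t • CB.T δ f ∈ convexHull ℝ (S1 ∪ S0) := by
    by_contra hno
    push Not at hno
    set ray : Set ((Fin d × Fin d × CB.Wd n δ) → ℝ) := (fun t : ℝ => t • CB.T δ f) '' Set.Ici 0
      with hray
    have hrayc : Convex ℝ ray :=
      (convex_Ici (0 : ℝ)).is_linear_image
        ⟨fun a b => add_smul a b _, fun a b => by simp [smul_smul]⟩
    have hraycl : IsClosed ray :=
      (isClosedEmbedding_smul_left hTf).isClosedMap _ isClosed_Ici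
    have hdisj : Disjoint (convexHull ℝ (S1 ∪ S0)) ray := by
      rw [Set.disjoint_left]
      rintro x hx ⟨t, ht, rfl⟩
      exact hno t ht hx
    obtain ⟨φ, u, v, hφ1, huv, hφ2⟩ := geometric_hahn_banach_compact_closed
      (convex_convexHull ℝ (S1 ∪ S0)) (CB.isCompact_hull hScomp) hrayc hraycl hdisj
    have hv0 : v < 0 := by
      have := hφ2 0 ⟨0, Set.mem_Ici.2 le_rfl, by simp⟩
      simpa using this
    have hφf : 0 ≤ φ (CB.T δ f) := by
      by_contra hneg
      push Not at hneg
      have h1 : 0 ≤ v / φ (CB.T δ f) := div_nonneg_of_nonpos hv0.le hneg.le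
      have := hφ2 _ ⟨v / φ (CB.T δ f), h1, rfl⟩
      simp only [map_smul, smul_eq_mul] at this
      rw [div_mul_cancel₀ _ hneg.ne] at this
      exact lt_irrefl _ this
    obtain ⟨η, hη⟩ := geometric_hahn_banach_point_point hTf
    rw [map_zero] at hη
    obtain ⟨C, hC⟩ := hScomp.exists_bound_of_continuousOn η.continuous.continuousOn
    set r : ℝ := -u / (|C| + 1) with hr
    have hC1 : 0 < |C| + 1 := by positivity
    have hrpos : 0 < r := div_pos (by linarith) hC1
    obtain ⟨l, hl, hlT⟩ := CB.exists_lam (-φ + r • η).toLinearMap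
    have hψ : ∀ x ∈ S1 ∪ S0, 0 < (-φ + r • η).toLinearMap x := by
      intro x hx
      have h1 := hφ1 x (subset_convexHull ℝ _ hx)
      have h2 := (abs_le.1 ((Real.norm_eq_abs _).symm.le.trans (hC x hx))).1
      have h3 : r * (|C| + 1) = -u := by rw [hr]; field_simp
      have h4 : C ≤ |C| := le_abs_self C
      simp only [ContinuousLinearMap.coe_coe, ContinuousLinearMap.add_apply,
        ContinuousLinearMap.neg_apply, ContinuousLinearMap.smul_apply, smul_eq_mul]
      nlinarith
    have hK : (CB.Km m A l).PosDef := by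
      refine CB.Km_posDef A hA l hl fun y hy => ?_
      rw [← hlT _ (CB.pen_herm A hA y) (CB.pen_deg A y)]
      exact hψ _ (Or.inl ⟨y, by simpa using hy, rfl⟩)
    have hK0 : (CB.Km m A0 l).PosDef := by
      refine CB.Km_posDef A0 hA0h l hl fun y hy => ?_
      rw [← hlT _ (CB.pen_herm A0 hA0h y) (CB.pen_deg A0 y)]
      exact hψ _ (Or.inr ⟨y, by simpa using hy, rfl⟩)
    have hG : (CB.Gm m l).PosDef := by
      have := hK0.submatrix (e := fun q : Fin d × CB.Wd n m => ((0 : Fin 1), q))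
        (fun a b h => (Prod.mk.inj h).2)
      convert this using 1
      ext p q
      simp [CB.Km, hA0]
    obtain ⟨k, X, ξ, hX, hLX, hvs⟩ := CB.gns A l hl hG hK.posSemidef
    have hfX := (hpos k X hX hLX).dotProduct_mulVec_nonneg (fun p => ξ p.1 p.2)
    rw [CB.eval_vs X ξ l hvs f hfdeg] at hfX
    have h1 := (Complex.le_def.1 hfX).1
    rw [← hlT f hf hfdeg] at h1
    simp only [ContinuousLinearMap.coe_coe, ContinuousLinearMap.add_apply, Complex.zero_re,
        ContinuousLinearMap.neg_apply, ContinuousLinearMap.smul_apply, smul_eq_mul] at h1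
    nlinarith
  obtain ⟨t, ht, hmem⟩ := hmeet
  obtain ⟨ι, _, z, w, hz, haff, hw, hw1, hsum⟩ := eq_pos_convex_span_of_mem_convexHull hmem
  have hz' : ∀ i, ∃ g : Matrix (Fin d) (Fin d) (FreeAlg n), z i = CB.T δ g ∧
      ((∃ y : Fin e × Fin d × CB.Wd n m → ℂ, y ≠ 0 ∧ g = CB.pen A y) ∨
       (∃ y : Fin 1 × Fin d × CB.Wd n m → ℂ, y ≠ 0 ∧ g = CB.pen A0 y)) := by
    intro i
    rcases hz ⟨i, rfl⟩ with ⟨y, hy, h⟩ | ⟨y, hy, h⟩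
    · refine ⟨_, h.symm, Or.inl ⟨y, ?_, rfl⟩⟩
      rintro rfl
      simp at hy
    · refine ⟨_, h.symm, Or.inr ⟨y, ?_, rfl⟩⟩
      rintro rfl
      simp at hy
  choose g hg hgt using hz'
  have hgh : ∀ i, IsHermPoly (g i) := by
    intro i
    rcases hgt i with ⟨y, -, h⟩ | ⟨y, -, h⟩ <;> rw [h]
    · exact CB.pen_herm A hA y
    · exact CB.pen_herm A0 hA0h y
  have hgd : ∀ i, matDegLE (g i) δ := by
    intro i
    rcases hgt i with ⟨y, -, h⟩ | ⟨y, -, h⟩ <;> rw [h]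
    · exact CB.pen_deg A y
    · exact CB.pen_deg A0 y
  have hsumh : ∀ c : ι → ℝ, IsHermPoly (∑ i, (c i : ℂ) • g i) := by
    intro c i j
    simp only [Matrix.sum_apply, Matrix.smul_apply, CB.nstar_sum, CB.nstar_smul,
      Complex.conj_ofReal]
    exact Finset.sum_congr rfl fun a _ => by rw [← hgh a i j]
  have hsumd : ∀ c : ι → ℝ, matDegLE (∑ i, (c i : ℂ) • g i) δ := by
    intro c i j
    simp only [Matrix.sum_apply, Matrix.smul_apply]
    exact Submodule.sum_mem _ fun a _ => Submodule.smul_mem _ _ (hgd a i j)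
  simp only [hg] at hsum
  have htpos : 0 < t := by
    rcases ht.lt_or_eq with h | h
    · exact h
    · exfalso
      rw [← h, zero_smul, ← CB.T_sum, ← hT0] at hsum
      have h0 := CB.T_inj (hsumh w) hzero (hsumd w) hzerod hsum
      obtain ⟨l, hl1, hl0⟩ := CB.exists_strict d m A hA
      have h1 := congrArg (fun F => (CB.LamM l F).re) h0
      simp only [map_sum, map_smul, map_zero, smul_eq_mul, Complex.re_sum, Complex.re_ofReal_mul,
        Complex.zero_re] at h1
      have hne : (Finset.univ : Finset ι).Nonempty := by
        by_contra hemp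
        rw [Finset.not_nonempty_iff_eq_empty] at hemp
        rw [hemp] at hw1
        simp at hw1
      refine absurd h1 (Finset.sum_pos (fun i _ => mul_pos (hw i) ?_) hne).ne'
      rcases hgt i with ⟨y, hy, h⟩ | ⟨y, hy, h⟩ <;> rw [h, CB.LamM_pen]
      · exact (Complex.lt_def.1 (hl1.dotProduct_mulVec_pos hy)).1
      · exact (Complex.lt_def.1 (hl0.dotProduct_mulVec_pos hy)).1
  have hfsum : f = ∑ i, ((w i / t : ℝ) : ℂ) • g i := by
    refine CB.T_inj hf (hsumh fun i => w i / t) hfdeg (hsumd fun i => w i / t) ?_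
    rw [CB.T_sum]
    have : CB.T δ f = t⁻¹ • (t • CB.T δ f) := by
      rw [smul_smul, inv_mul_cancel₀ htpos.ne', one_smul]
    rw [this, ← hsum, Finset.smul_sum]
    refine Finset.sum_congr rfl fun i _ => ?_
    rw [smul_smul]
    congr 1
    ring
  obtain ⟨M, N, s, v, hs, hv, hsv, hMN⟩ := CB.pack (m := m) A
    (fun i => ((w i / t : ℝ) : ℂ) • g i) (by
      intro i
      have hc : ((w i / t : ℝ) : ℂ) = ((Real.sqrt (w i / t) ^ 2 : ℝ) : ℂ) := by
        rw [Real.sq_sqrt (div_pos (hw i) htpos).le]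
      rcases hgt i with ⟨y, -, h⟩ | ⟨y, -, h⟩
      · right
        refine ⟨CB.rowm ((Real.sqrt (w i / t) : ℂ) • y), CB.rowm_deg _, ?_⟩
        rw [h, hc, ← CB.pen_smul]
        rfl
      · left
        obtain ⟨s, hs1, hs2⟩ := CB.pen_zero_eq ((Real.sqrt (w i / t) : ℂ) • y)
        refine ⟨s, hs1, ?_⟩
        rw [h, hc, ← CB.pen_smul, ← hs2])
  refine ⟨M, N, s, v, hs, hv, hfsum.trans hsv, ?_⟩
  rw [hMN]
  have h1 : Fintype.card ι ≤ Fintype.card (Fin d × Fin d × CB.Wd n δ) + 1 := by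
    refine haff.card_le_finrank_succ.trans (Nat.succ_le_succ ?_)
    refine (Submodule.finrank_le _).trans ?_
    rw [Module.finrank_fintype_fun_eq_card]
  have h2 : Fintype.card (CB.Wd n δ) ≤ ∑ j ∈ Finset.range (matDeg f + 2), n ^ j :=
    (CB.card_Wd n δ).trans (Finset.sum_le_sum_of_subset (Finset.range_mono (by omega)))
  rw [Fintype.card_prod, Fintype.card_prod, Fintype.card_fin] at h1
  calc Fintype.card ι ≤ d * (d * Fintype.card (CB.Wd n δ)) + 1 := h1
    _ = 1 + d ^ 2 * Fintype.card (CB.Wd n δ) := by ring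
    _ ≤ _ := Nat.add_le_add_left (Nat.mul_le_mul_left _ h2) _
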